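/- arXiv:2203.06625 — 3 statements merged into one kernel-verified Lean document; each statement's English description precedes it below -/
import Mathlib

section
/- Let n ≥ 5 and V = F_2^n, and let T = F_2·(1,…,1) be the unique element of C(n,1)_2. Let G_1'(V) be the set of 1-dimensional subspaces of V of weight at least 3. Suppose f_2 : C(n,2)_2 → G_2(V) and f_3 : C(n,3)_2 → G_3(V) are injective maps sending adjacent pairs to adjacent pairs such that: f_2(S(T)) is a star of Γ_2(V); f_2(X) ⊂ f_3(Z) whenever X ∈ C(n,2)_2, Z ∈ C(n,3)_2 and X ⊂ Z; and g : G_1'(V) → G_1(V) satisfies f_2(S^c(P)) ⊆ S(g(P)) for every P ∈ G_1'(V). Then g is injective. -/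
/-!
Common definitions: `V = F^n`, coordinate hyperplanes, Grassmannians `G_k(V)`,
non-degenerate linear `[n,k]_q` codes `C(n,k)_q`, adjacency, stars, tops,
and (maximal) cliques of the graph `Γ(n,k)_q` of non-degenerate codes.
-/

/-- The `i`-th coordinate hyperplane `C_i ⊂ F^n`: the kernel of the `i`-th
coordinate functional. -/
def coordHyp (F : Type*) [Field F] (n : ℕ) (i : Fin n) : Submodule F (Fin n → F) :=
  LinearMap.ker (LinearMap.proj i : (Fin n → F) →ₗ[F] F)

/-- The Grassmannian `G_k(V)`: the set of `k`-dimensional subspaces of `F^n`. -/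
def grass (F : Type*) [Field F] (n k : ℕ) : Set (Submodule F (Fin n → F)) :=
  {X | Module.finrank F ↥X = k}

/-- `C(n,k)_q`: the set of non-degenerate linear `[n,k]` codes, i.e. `k`-dimensional
subspaces of `F^n` not contained in any coordinate hyperplane. -/
def ndCodes (F : Type*) [Field F] (n k : ℕ) : Set (Submodule F (Fin n → F)) :=
  {X | Module.finrank F ↥X = k ∧ ∀ i : Fin n, ¬ X ≤ coordHyp F n i}

/-- Adjacency of `k`-dimensional subspaces: the intersection is `(k-1)`-dimensional. -/
def adjSub (F : Type*) [Field F] (n k : ℕ) (X Y : Submodule F (Fin n → F)) : Prop :=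
  Module.finrank F ↥(X ⊓ Y) = k - 1

/-- The star `S(X) ⊂ G_k(V)` of a `(k-1)`-dimensional subspace `X`: all `k`-dimensional
subspaces containing `X`. -/
def starOf (F : Type*) [Field F] (n k : ℕ) (X : Submodule F (Fin n → F)) :
    Set (Submodule F (Fin n → F)) :=
  {Y | Module.finrank F ↥Y = k ∧ X ≤ Y}

/-- The top `T(Y) ⊂ G_k(V)` of a `(k+1)`-dimensional subspace `Y`: all `k`-dimensional
subspaces of `Y`. -/
def topOf (F : Type*) [Field F] (n k : ℕ) (Y : Submodule F (Fin n → F)) :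
    Set (Submodule F (Fin n → F)) :=
  {Z | Module.finrank F ↥Z = k ∧ Z ≤ Y}

/-- `S^c(X) = S(X) ∩ C(n,k)_q`. -/
def scOf (F : Type*) [Field F] (n k : ℕ) (X : Submodule F (Fin n → F)) :
    Set (Submodule F (Fin n → F)) :=
  starOf F n k X ∩ ndCodes F n k

/-- `T^c(Y) = T(Y) ∩ C(n,k)_q`. -/
def tcOf (F : Type*) [Field F] (n k : ℕ) (Y : Submodule F (Fin n → F)) :
    Set (Submodule F (Fin n → F)) :=
  topOf F n k Y ∩ ndCodes F n k

/-- `c(X)`: the number of coordinate hyperplanes containing the subspace `X`. -/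
noncomputable def numHyp (F : Type*) [Field F] (n : ℕ) (X : Submodule F (Fin n → F)) : ℕ :=
  Set.ncard {i : Fin n | X ≤ coordHyp F n i}

/-- A clique of the graph `Γ(n,k)_q`: a set of non-degenerate `[n,k]` codes that are
pairwise adjacent. -/
def isClique (F : Type*) [Field F] (n k : ℕ) (S : Set (Submodule F (Fin n → F))) : Prop :=
  S ⊆ ndCodes F n k ∧ S.Pairwise (adjSub F n k)

/-- A maximal clique of `Γ(n,k)_q`: a clique not properly contained in another clique. -/
def isMaxClique (F : Type*) [Field F] (n k : ℕ) (S : Set (Submodule F (Fin n → F))) : Prop :=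
  isClique F n k S ∧ ∀ T, isClique F n k T → S ⊆ T → T = S

/-- `[m]_q = q^{m-1} + ⋯ + q + 1 = (q^m - 1)/(q - 1)`. -/
def gaussNum (q m : ℕ) : ℕ := ∑ i ∈ Finset.range m, q ^ i

/-- The set `G₁'(V)` of 1-dimensional subspaces of `F_2^n` of weight at least 3
(the weight being the number of nonzero coordinates of the nonzero vector). -/
def weightGE3 (n : ℕ) : Set (Submodule (ZMod 2) (Fin n → ZMod 2)) :=
  {P | Module.finrank (ZMod 2) ↥P = 1 ∧
    ∃ v ∈ P, v ≠ 0 ∧ 3 ≤ (Finset.univ.filter fun i : Fin n => v i ≠ 0).card}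


section helpers15
set_option linter.unusedSimpArgs false
variable {n : ℕ}

abbrev Vec (n : ℕ) := Fin n → ZMod 2

def Wt3 (v : Vec n) : Prop := ∃ x y z, x ≠ y ∧ x ≠ z ∧ y ≠ z ∧ v x ≠ 0 ∧ v y ≠ 0 ∧ v z ≠ 0

def Cov (u v : Vec n) : Prop := ∀ i, u i ≠ 0 ∨ v i ≠ 0

lemma z2_cases (a : ZMod 2) : a = 0 ∨ a = 1 := by revert a; decide

lemma Wt3.ne_zero {v : Vec n} (h : Wt3 v) : v ≠ 0 := by
  rintro rfl
  obtain ⟨x, _, _, _, _, _, h, _⟩ := h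
  exact h rfl

lemma add_self2 (u : Vec n) : u + u = 0 := by
  funext i
  simp only [Pi.add_apply, Pi.zero_apply]
  generalize u i = a
  revert a; decide

lemma eq_of_add_eq_zero2 {u v : Vec n} (h : u + v = 0) : u = v := by
  calc u = u + v + v := by rw [add_assoc, add_self2, add_zero]
    _ = v := by rw [h, zero_add]

lemma mem_span_pair2 {u v w : Vec n} (h : w ∈ Submodule.span (ZMod 2) {u, v}) :
    w = 0 ∨ w = u ∨ w = v ∨ w = u + v := by
  obtain ⟨a, b, rfl⟩ := Submodule.mem_span_pair.1 h
  rcases z2_cases a with rfl | rfl <;> rcases z2_cases b with rfl | rfl <;> simp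

lemma finrank_pair {u v : Vec n} (hu : u ≠ 0) (hv : v ≠ 0) (huv : u ≠ v) :
    Module.finrank (ZMod 2) (Submodule.span (ZMod 2) {u, v}) = 2 := by
  have hli : LinearIndependent (ZMod 2) ![u, v] := by
    rw [LinearIndependent.pair_iff]
    intro s t h
    rcases z2_cases s with rfl | rfl <;> rcases z2_cases t with rfl | rfl <;> simp at h ⊢
    · exact hv h
    · exact hu h
    · exact huv (eq_of_add_eq_zero2 h)
  have := finrank_span_eq_card hli
  have hr : Set.range ![u, v] = {u, v} := by
    ext x
    simp only [Set.mem_range, Fin.exists_fin_two, Set.mem_insert_iff, Set.mem_singleton_iff]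
    exact or_congr eq_comm eq_comm
  rw [hr] at this
  simpa using this

lemma span_pair_eq {U : Submodule (ZMod 2) (Vec n)} (hU : Module.finrank (ZMod 2) U = 2)
    {u v : Vec n} (hu : u ≠ 0) (hv : v ≠ 0) (huv : u ≠ v) (h1 : u ∈ U) (h2 : v ∈ U) :
    Submodule.span (ZMod 2) {u, v} = U := by
  apply Submodule.eq_of_le_of_finrank_eq
  · rw [Submodule.span_le]
    rintro x (rfl | rfl)
    · exact h1
    · exact h2
  · rw [hU, finrank_pair hu hv huv]

lemma sum_zero {U : Submodule (ZMod 2) (Vec n)} (hU : Module.finrank (ZMod 2) U = 2)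
    {u v w : Vec n} (hu : u ≠ 0) (hv : v ≠ 0) (hw : w ≠ 0) (huv : u ≠ v) (huw : u ≠ w)
    (hvw : v ≠ w) (h1 : u ∈ U) (h2 : v ∈ U) (h3 : w ∈ U) : w = u + v := by
  rw [← span_pair_eq hU hu hv huv h1 h2] at h3
  rcases mem_span_pair2 h3 with h | h | h | h
  · exact absurd h hw
  · exact absurd h.symm huw
  · exact absurd h.symm hvw
  · exact h

lemma not_le_coord {Z : Submodule (ZMod 2) (Vec n)} {u v : Vec n} (hu : u ∈ Z) (hv : v ∈ Z)
    (hc : Cov u v) (i : Fin n) : ¬ Z ≤ coordHyp (ZMod 2) n i := by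
  intro h
  rcases hc i with h' | h'
  · exact h' (by simpa [coordHyp] using h hu)
  · exact h' (by simpa [coordHyp] using h hv)

lemma nd_pair {u v : Vec n} (hu : u ≠ 0) (hv : v ≠ 0) (huv : u ≠ v) (hc : Cov u v) :
    Submodule.span (ZMod 2) {u, v} ∈ ndCodes (ZMod 2) n 2 :=
  ⟨finrank_pair hu hv huv, not_le_coord (Submodule.subset_span (by simp))
    (Submodule.subset_span (by simp)) hc⟩

lemma li_triple {u v w : Vec n}
    (h : ∀ x y z : ZMod 2, x • u + y • v + z • w = 0 → x = 0 ∧ y = 0 ∧ z = 0) :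
    Module.finrank (ZMod 2) (Submodule.span (ZMod 2) {u, v, w}) = 3 := by
  have hli : LinearIndependent (ZMod 2) ![u, v, w] := by
    rw [Fintype.linearIndependent_iff]
    intro g hg
    have := h (g 0) (g 1) (g 2) (by simpa [Fin.sum_univ_three] using hg)
    intro i
    fin_cases i
    · exact this.1
    · exact this.2.1
    · exact this.2.2
  have := finrank_span_eq_card hli
  have hr : Set.range ![u, v, w] = {u, v, w} := by
    ext x
    simp only [Set.mem_range, Set.mem_insert_iff, Set.mem_singleton_iff]
    constructor
    · rintro ⟨i, rfl⟩
      fin_cases i <;> simp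
    · rintro (rfl | rfl | rfl)
      · exact ⟨0, rfl⟩
      · exact ⟨1, rfl⟩
      · exact ⟨2, rfl⟩
  rw [hr] at this
  simpa using this

lemma one_dim_exists {P : Submodule (ZMod 2) (Vec n)} (hP : Module.finrank (ZMod 2) P = 1) :
    ∃ u, u ≠ 0 ∧ P = Submodule.span (ZMod 2) {u} := by
  have hne : P ≠ ⊥ := by
    rintro rfl
    simp at hP
  obtain ⟨u, hu, hu0⟩ := Submodule.exists_mem_ne_zero_of_ne_bot hne
  refine ⟨u, hu0, ?_⟩
  symm
  apply Submodule.eq_of_le_of_finrank_eq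
  · rw [Submodule.span_le]
    simpa using hu
  · rw [hP, finrank_span_singleton hu0]

lemma wt3_of_card {v : Vec n} (h : 3 ≤ (Finset.univ.filter fun i : Fin n => v i ≠ 0).card) :
    Wt3 v := by
  obtain ⟨x, y, z, hx, hy, hz, h1, h2, h3⟩ := Finset.two_lt_card_iff.1 h
  simp only [Finset.mem_filter, Finset.mem_univ, true_and] at hx hy hz
  exact ⟨x, y, z, h1, h2, h3, hx, hy, hz⟩

lemma card_of_wt3 {v : Vec n} (h : Wt3 v) :
    3 ≤ (Finset.univ.filter fun i : Fin n => v i ≠ 0).card := by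
  obtain ⟨x, y, z, h1, h2, h3, hx, hy, hz⟩ := h
  exact Finset.two_lt_card_iff.2 ⟨x, y, z, by simpa using hx, by simpa using hy,
    by simpa using hz, h1, h2, h3⟩

lemma weight_iff {P : Submodule (ZMod 2) (Vec n)} :
    P ∈ weightGE3 n ↔ ∃ v, Wt3 v ∧ P = Submodule.span (ZMod 2) {v} := by
  constructor
  · rintro ⟨h1, v, hv, hv0, hc⟩
    refine ⟨v, wt3_of_card hc, ?_⟩
    symm
    apply Submodule.eq_of_le_of_finrank_eq
    · rw [Submodule.span_le]
      simpa using hv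
    · rw [h1, finrank_span_singleton hv0]
  · rintro ⟨v, hv, rfl⟩
    exact ⟨finrank_span_singleton hv.ne_zero, v, Submodule.mem_span_singleton_self v,
      hv.ne_zero, card_of_wt3 hv⟩

set_option maxHeartbeats 4000000 in
/-- The combinatorial core. -/
lemma core
    (f₂ f₃ : Submodule (ZMod 2) (Vec n) → Submodule (ZMod 2) (Vec n))
    (G : Vec n → Vec n)
    (hmem₂ : ∀ X ∈ ndCodes (ZMod 2) n 2, f₂ X ∈ grass (ZMod 2) n 2)
    (hinj₂ : Set.InjOn f₂ (ndCodes (ZMod 2) n 2))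
    (hmem₃ : ∀ X ∈ ndCodes (ZMod 2) n 3, f₃ X ∈ grass (ZMod 2) n 3)
    (hinj₃ : Set.InjOn f₃ (ndCodes (ZMod 2) n 3))
    (hcompat : ∀ X ∈ ndCodes (ZMod 2) n 2, ∀ Z ∈ ndCodes (ZMod 2) n 3,
      X ≤ Z → f₂ X ≤ f₃ Z)
    (hG0 : ∀ v, Wt3 v → G v ≠ 0)
    (hG : ∀ v, Wt3 v → ∀ X ∈ ndCodes (ZMod 2) n 2, v ∈ X → G v ∈ f₂ X)
    (hGi : ∀ u v, Wt3 u → Wt3 v → G u = G v → u = v ∨ u + v = 1)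
    (p q : Vec n) (hp : Wt3 p) (hq : Wt3 q) (hpq : p + q = 1) (hGpq : G p = G q) : False := by
  have tri : ∀ u v w, Wt3 u → Wt3 v → Wt3 w → u + v = w → Cov u v → (∃ x, u x = 0) →
      (∃ x, v x = 0) → (∃ x, w x = 0) → G w = G u + G v := by
    intro u v w hu hv hw huv hc hu1 hv1 hw1
    have ne1 : ∀ u : Vec n, (∃ x, u x = 0) → u ≠ 1 := by
      rintro u ⟨x, hx⟩ rfl
      simp at hx
    have huvne : u ≠ v := by
      rintro rfl
      rw [add_self2] at huv
      exact hw.ne_zero huv.symm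
    have hnd := nd_pair hu.ne_zero hv.ne_zero huvne hc
    have mu : u ∈ Submodule.span (ZMod 2) {u, v} := Submodule.subset_span (by simp)
    have mv : v ∈ Submodule.span (ZMod 2) {u, v} := Submodule.subset_span (by simp)
    have mw : w ∈ Submodule.span (ZMod 2) {u, v} := huv ▸ add_mem mu mv
    refine sum_zero (hmem₂ _ hnd) (hG0 u hu) (hG0 v hv) (hG0 w hw) ?_ ?_ ?_
      (hG u hu _ hnd mu) (hG v hv _ hnd mv) (hG w hw _ hnd mw)
    · intro h
      rcases hGi u v hu hv h with h | h
      · exact huvne h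
      · exact ne1 w hw1 (huv ▸ h)
    · intro h
      rcases hGi u w hu hw h with h | h
      · subst h
        exact hv.ne_zero (by simpa using huv)
      · rw [← huv, ← add_assoc, add_self2, zero_add] at h
        exact ne1 v hv1 h
    · intro h
      rcases hGi v w hv hw h with h | h
      · subst h
        exact hu.ne_zero (by simpa using huv)
      · rw [← huv, add_comm, add_assoc, add_self2, add_zero] at h
        exact ne1 u hu1 h
  obtain ⟨i, j, l, hij, hil, hjl, hi, hj, hl⟩ := hp
  obtain ⟨k, m, r, hkm, hkr, hmr, hk, hm, hr⟩ := hq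
  have hp : Wt3 p := ⟨i, j, l, hij, hil, hjl, hi, hj, hl⟩
  have hq : Wt3 q := ⟨k, m, r, hkm, hkr, hmr, hk, hm, hr⟩
  have hpq' : ∀ x, p x + q x = 1 := fun x => congrFun hpq x
  have c1 : ∀ s t : ZMod 2, s + t = 1 → s ≠ 0 → s = 1 ∧ t = 0 := by decide
  obtain ⟨pi, qi⟩ := c1 _ _ (hpq' i) hi
  obtain ⟨pj, qj⟩ := c1 _ _ (hpq' j) hj
  obtain ⟨pl, ql⟩ := c1 _ _ (hpq' l) hl
  obtain ⟨qk, pk⟩ := c1 _ _ ((add_comm _ _).trans (hpq' k)) hk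
  obtain ⟨qm, pm⟩ := c1 _ _ ((add_comm _ _).trans (hpq' m)) hm
  obtain ⟨qr, pr⟩ := c1 _ _ ((add_comm _ _).trans (hpq' r)) hr
  have sep : ∀ x y, p x = 1 → p y = 0 → x ≠ y := by
    rintro x y h h' rfl
    rw [h] at h'
    exact one_ne_zero h'
  have hik := sep i k pi pk
  have him := sep i m pi pm
  have hir := sep i r pi pr
  have hjk := sep j k pj pk
  have hjm := sep j m pj pm
  have hjr := sep j r pj pr
  have hlk := sep l k pl pk
  have hlm := sep l m pl pm
  have hlr := sep l r pl pr
  obtain ⟨a, ha⟩ : ∃ a : Vec n, ∀ x, a x = if x = i then 1 else 0 := ⟨_, fun x => rfl⟩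
  obtain ⟨b, hb⟩ : ∃ b : Vec n, ∀ x, b x = if x = j then 1 else 0 := ⟨_, fun x => rfl⟩
  obtain ⟨c, hc⟩ : ∃ c : Vec n, ∀ x, c x = if x = k then 1 else 0 := ⟨_, fun x => rfl⟩
  have ai : a i = 1 := by simp [ha]
  have aj : a j = 0 := by simp [ha, hij.symm]
  have al : a l = 0 := by simp [ha, hil.symm]
  have ak : a k = 0 := by simp [ha, hik.symm]
  have am : a m = 0 := by simp [ha, him.symm]
  have ar : a r = 0 := by simp [ha, hir.symm]
  have bi : b i = 0 := by simp [hb, hij]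
  have bj : b j = 1 := by simp [hb]
  have bl : b l = 0 := by simp [hb, hjl.symm]
  have bk : b k = 0 := by simp [hb, hjk.symm]
  have bm : b m = 0 := by simp [hb, hjm.symm]
  have br : b r = 0 := by simp [hb, hjr.symm]
  have ci : c i = 0 := by simp [hc, hik]
  have cj : c j = 0 := by simp [hc, hjk]
  have cl : c l = 0 := by simp [hc, hlk]
  have ck : c k = 1 := by simp [hc]
  have cm : c m = 0 := by simp [hc, hkm.symm]
  have cr : c r = 0 := by simp [hc, hkr.symm]
  have pt : ∀ x, p x + q x = 1 ∧ (a x = 1 → p x = 1 ∧ b x = 0) ∧ (b x = 1 → p x = 1) ∧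
      (c x = 1 → p x = 0) := by
    intro x
    refine ⟨hpq' x, ?_, ?_, ?_⟩
    · intro h
      have : x = i := by
        by_contra h'
        simp [ha, h'] at h
      subst this
      exact ⟨pi, bi⟩
    · intro h
      have : x = j := by
        by_contra h'
        simp [hb, h'] at h
      subst this
      exact pj
    · intro h
      have : x = k := by
        by_contra h'
        simp [hc, h'] at h
      subst this
      exact pk
  clear ha hb hc
  have two : (1 : ZMod 2) + 1 = 0 := by decide
  have w1 : Wt3 (1 + c) := ⟨i, j, l, hij, hil, hjl, by simp [*], by simp [*], by simp [*]⟩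
  have w2 : Wt3 (p + c) := ⟨i, j, l, hij, hil, hjl, by simp [*], by simp [*], by simp [*]⟩
  have w3 : Wt3 (q + b) := ⟨k, m, r, hkm, hkr, hmr, by simp [*], by simp [*], by simp [*]⟩
  have w4 : Wt3 (p + b + c) := ⟨i, l, k, hil, hik, hlk, by simp [*], by simp [*], by simp [*]⟩
  have w5 : Wt3 (1 + b + c) := ⟨i, l, m, hil, him, hlm, by simp [*], by simp [*], by simp [*]⟩
  have w6 : Wt3 (q + a + b) := ⟨k, m, r, hkm, hkr, hmr, by simp [*], by simp [*], by simp [*]⟩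
  have e1 : G q = G (1 + c) + G (p + c) := by
    refine tri _ _ _ w1 w2 hq ?_ ?_ ⟨k, by simp [*]⟩ ⟨m, by simp [*]⟩ ⟨i, by simp [*]⟩
    · funext x
      have := (pt x).1
      simp only [Pi.add_apply, Pi.one_apply]
      generalize p x = P at *; generalize q x = Q at *
      generalize c x = C at *
      clear * - this
      revert P Q C; decide
    · intro x
      have := pt x
      simp only [Pi.add_apply, Pi.one_apply]
      generalize p x = P at *; generalize c x = C at *
      obtain ⟨_, _, _, h⟩ := this
      clear * - h
      revert P C; decide
  have e2 : G (q + b) = G (1 + c) + G (p + b + c) := by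
    refine tri _ _ _ w1 w4 w3 ?_ ?_ ⟨k, by simp [*]⟩ ⟨m, by simp [*]⟩ ⟨i, by simp [*]⟩
    · funext x
      have := (pt x).1
      simp only [Pi.add_apply, Pi.one_apply]
      generalize p x = P at *; generalize q x = Q at *
      generalize c x = C at *; generalize b x = B at *
      clear * - this
      revert P Q C B; decide
    · intro x
      obtain ⟨-, -, h, h'⟩ := pt x
      simp only [Pi.add_apply, Pi.one_apply]
      generalize p x = P at *; generalize c x = C at *; generalize b x = B at *
      clear * - h h'
      revert P C B; decide
  have e3 : G (q + b) = G (p + c) + G (1 + b + c) := by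
    refine tri _ _ _ w2 w5 w3 ?_ ?_ ⟨m, by simp [*]⟩ ⟨j, by simp [*]⟩ ⟨i, by simp [*]⟩
    · funext x
      have := (pt x).1
      simp only [Pi.add_apply, Pi.one_apply]
      generalize p x = P at *; generalize q x = Q at *
      generalize c x = C at *; generalize b x = B at *
      clear * - this
      revert P Q C B; decide
    · intro x
      obtain ⟨-, -, h, h'⟩ := pt x
      simp only [Pi.add_apply, Pi.one_apply]
      generalize p x = P at *; generalize c x = C at *; generalize b x = B at *
      clear * - h h'
      revert P C B; decide
  have e4 : G (p + b + c) = G p + G (1 + b + c) := by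
    rw [hGpq, e1]
    have h := e2.symm.trans e3
    have h2 : G (1 + c) + (G (1 + c) + G (p + b + c)) = G (p + b + c) := by
      rw [← add_assoc, add_self2, zero_add]
    rw [← h2, h]
    exact (add_assoc _ _ _).symm
  -- the three lines
  have cov1 : Cov (q + a + b) p := by
    intro x
    obtain ⟨h0, h1, h, h'⟩ := pt x
    simp only [Pi.add_apply]
    generalize p x = P at *; generalize a x = A at *; generalize b x = B at *
    generalize q x = Q at *
    clear * - h0 h h1
    revert P Q A B; decide
  have cov2 : Cov (q + a + b) (p + b + c) := by
    intro x
    obtain ⟨h0, h1, h, h'⟩ := pt x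
    simp only [Pi.add_apply]
    generalize p x = P at *; generalize a x = A at *; generalize b x = B at *
    generalize q x = Q at *; generalize c x = C at *
    clear * - h0 h h1 h'
    revert P Q A B C; decide
  have cov3 : Cov (q + a + b) (1 + b + c) := by
    intro x
    obtain ⟨h0, h1, h, h'⟩ := pt x
    simp only [Pi.add_apply, Pi.one_apply]
    generalize p x = P at *; generalize a x = A at *; generalize b x = B at *
    generalize q x = Q at *; generalize c x = C at *
    clear * - h0 h h1 h'
    revert P Q A B C; decide
  have nel : ∀ v : Vec n, v l = 1 → q + a + b ≠ v := by
    rintro v h rfl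
    simp [*] at h
  have L1 := nd_pair w6.ne_zero hp.ne_zero (nel p pl) cov1
  have L2 := nd_pair w6.ne_zero w4.ne_zero (nel _ (by simp [*])) cov2
  have L3 := nd_pair w6.ne_zero w5.ne_zero (nel _ (by simp [*])) cov3
  have Z1 : Submodule.span (ZMod 2) {q + a + b, p, p + b + c} ∈ ndCodes (ZMod 2) n 3 := by
    refine ⟨li_triple ?_, not_le_coord (Submodule.subset_span (by simp))
      (Submodule.subset_span (by simp)) cov1⟩
    intro x y z h
    have h1 := congrFun h l
    have h2 := congrFun h j
    have h3 := congrFun h i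
    simp only [Pi.add_apply, Pi.smul_apply, smul_eq_mul, Pi.zero_apply,
      pi, pj, pl, pk, pm, pr, qi, qj, ql, qk, qm, qr, ai, aj, al, ak, am, ar, bi, bj, bl, bk, bm, br, ci, cj, cl, ck, cm, cr] at h1 h2 h3
    clear * - h1 h2 h3
    revert x y z; decide
  have Z2 : Submodule.span (ZMod 2) {q + a + b, p, 1 + b + c} ∈ ndCodes (ZMod 2) n 3 := by
    refine ⟨li_triple ?_, not_le_coord (Submodule.subset_span (by simp))
      (Submodule.subset_span (by simp)) cov1⟩
    intro x y z h
    have h1 := congrFun h l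
    have h2 := congrFun h j
    have h3 := congrFun h i
    simp only [Pi.add_apply, Pi.smul_apply, smul_eq_mul, Pi.zero_apply, Pi.one_apply,
      pi, pj, pl, pk, pm, pr, qi, qj, ql, qk, qm, qr, ai, aj, al, ak, am, ar, bi, bj, bl, bk, bm, br, ci, cj, cl, ck, cm, cr]
            at h1 h2 h3
    clear * - h1 h2 h3
    revert x y z; decide
  have hZ : Submodule.span (ZMod 2) {q + a + b, p, p + b + c} ≠
      Submodule.span (ZMod 2) {q + a + b, p, 1 + b + c} := by
    intro h
    have hm' : 1 + b + c ∈ Submodule.span (ZMod 2) {q + a + b, p, p + b + c} := by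
      rw [h]
      exact Submodule.subset_span (by simp)
    obtain ⟨x, y, z, h⟩ := Submodule.mem_span_triple.1 hm'
    have h1 := congrFun h l
    have h2 := congrFun h j
    have h3 := congrFun h i
    have h4 := congrFun h m
    simp only [Pi.add_apply, Pi.smul_apply, smul_eq_mul, Pi.zero_apply, Pi.one_apply,
      pi, pj, pl, pk, pm, pr, qi, qj, ql, qk, qm, qr, ai, aj, al, ak, am, ar, bi, bj, bl, bk, bm, br, ci, cj, cl, ck, cm, cr]
            at h1 h2 h3 h4
    have aux : ∀ x y z : ZMod 2,
        x * (0 + 0 + 0) + y * 1 + z * (1 + 0 + 0) = 1 + 0 + 0 →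
        x * (0 + 0 + 1) + y * 1 + z * (1 + 1 + 0) = 1 + 1 + 0 →
        x * (0 + 1 + 0) + y * 1 + z * (1 + 0 + 0) = 1 + 0 + 0 →
        x * (1 + 0 + 0) + y * 0 + z * (0 + 0 + 0) = 1 + 0 + 0 → False := by decide
    exact aux x y z h1 h2 h3 h4
  have hLne : Submodule.span (ZMod 2) {q + a + b, p} ≠
      Submodule.span (ZMod 2) {q + a + b, p + b + c} := by
    intro h
    have hm' : p + b + c ∈ Submodule.span (ZMod 2) {q + a + b, p} := by
      rw [h]
      exact Submodule.subset_span (by simp)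
    obtain ⟨x, y, h⟩ := Submodule.mem_span_pair.1 hm'
    have h1 := congrFun h l
    have h2 := congrFun h j
    have h3 := congrFun h i
    simp only [Pi.add_apply, Pi.smul_apply, smul_eq_mul, Pi.zero_apply, Pi.one_apply,
      pi, pj, pl, pk, pm, pr, qi, qj, ql, qk, qm, qr, ai, aj, al, ak, am, ar, bi, bj, bl, bk, bm, br, ci, cj, cl, ck, cm, cr]
            at h1 h2 h3
    have aux : ∀ x y : ZMod 2,
        x * (0 + 0 + 0) + y * 1 = 1 + 0 + 0 →
        x * (0 + 0 + 1) + y * 1 = 1 + 1 + 0 →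
        x * (0 + 1 + 0) + y * 1 = 1 + 0 + 0 → False := by decide
    exact aux x y h1 h2 h3
  have hsub : ∀ {u v w : Vec n}, Submodule.span (ZMod 2) {u, v} ≤
      Submodule.span (ZMod 2) {u, v, w} := by
    intro u v w
    apply Submodule.span_mono
    intro x hx
    simp only [Set.mem_insert_iff, Set.mem_singleton_iff] at hx ⊢
    tauto
  have hsub' : ∀ {u v w : Vec n}, Submodule.span (ZMod 2) {u, w} ≤
      Submodule.span (ZMod 2) {u, v, w} := by
    intro u v w
    apply Submodule.span_mono
    intro x hx
    simp only [Set.mem_insert_iff, Set.mem_singleton_iff] at hx ⊢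
    tauto
  have i11 := hcompat _ L1 _ Z1 hsub
  have i21 := hcompat _ L2 _ Z1 hsub'
  have i12 := hcompat _ L1 _ Z2 hsub
  have i32 := hcompat _ L3 _ Z2 hsub'
  have i22 : f₂ (Submodule.span (ZMod 2) {q + a + b, p + b + c}) ≤
      f₃ (Submodule.span (ZMod 2) {q + a + b, p, 1 + b + c}) := by
    have hne : G (q + a + b) ≠ G (p + b + c) := by
      intro h
      rcases hGi _ _ w6 w4 h with h | h
      · have := congrFun h j
        have := congrFun h l
        simp [*] at this
      · have := congrFun h i
        simp [*] at this
    rw [← span_pair_eq (hmem₂ _ L2) (hG0 _ w6) (hG0 _ w4) hne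
      (hG _ w6 _ L2 (Submodule.subset_span (by simp)))
      (hG _ w4 _ L2 (Submodule.subset_span (by simp))), Submodule.span_le]
    rintro x (rfl | rfl)
    · exact i12 (hG _ w6 _ L1 (Submodule.subset_span (by simp)))
    · rw [e4]
      exact add_mem (i12 (hG _ hp _ L1 (Submodule.subset_span (by simp))))
        (i32 (hG _ w5 _ L3 (Submodule.subset_span (by simp))))
  have hf : f₂ (Submodule.span (ZMod 2) {q + a + b, p}) ≠
      f₂ (Submodule.span (ZMod 2) {q + a + b, p + b + c}) := fun h => hLne (hinj₂ L1 L2 h)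
  have big : ∀ A B Z : Submodule (ZMod 2) (Vec n), Module.finrank (ZMod 2) A = 2 →
      Module.finrank (ZMod 2) B = 2 → A ≠ B → Module.finrank (ZMod 2) Z = 3 → A ≤ Z → B ≤ Z →
      A ⊔ B = Z := by
    intro A B Z hA hB hAB hZ hAZ hBZ
    apply Submodule.eq_of_le_of_finrank_le (sup_le hAZ hBZ)
    have : A < A ⊔ B := by
      refine lt_of_le_of_ne le_sup_left ?_
      intro h
      have hBA : B ≤ A := by rw [h]; exact le_sup_right
      exact hAB (Submodule.eq_of_le_of_finrank_eq hBA (hB.trans hA.symm)).symm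
    have := Submodule.finrank_lt_finrank_of_lt this
    omega
  apply hZ
  apply hinj₃ Z1 Z2
  rw [← big _ _ _ (hmem₂ _ L1) (hmem₂ _ L2) hf (hmem₃ _ Z1) i11 i21]
  exact big _ _ _ (hmem₂ _ L1) (hmem₂ _ L2) hf (hmem₃ _ Z2) i12 i22

end helpers15

/-- (`q = 2`, `n ≥ 5`.) Let `T = F₂·(1,…,1)` be the unique element of
`C(n,1)_2`. Suppose `f₂ : C(n,2)_2 → G_2(V)` and `f₃ : C(n,3)_2 → G_3(V)` are injective,
adjacency-preserving, `f₂(S(T))` is a star of `Γ_2(V)`, `f₂ X ⊂ f₃ Z` whenever `X ⊂ Z`,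
and `g : G₁'(V) → G_1(V)` satisfies `f₂(S^c(P)) ⊆ S(g(P))` for every `P ∈ G₁'(V)`.
Then `g` is injective. -/
theorem stmt_15 (n : ℕ) (hn : 5 ≤ n)
    (T : Submodule (ZMod 2) (Fin n → ZMod 2))
    (hT : T = Submodule.span (ZMod 2) {(fun _ => 1 : Fin n → ZMod 2)})
    (f₂ f₃ g : Submodule (ZMod 2) (Fin n → ZMod 2) → Submodule (ZMod 2) (Fin n → ZMod 2))
    (hmem₂ : ∀ X ∈ ndCodes (ZMod 2) n 2, f₂ X ∈ grass (ZMod 2) n 2)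
    (hinj₂ : Set.InjOn f₂ (ndCodes (ZMod 2) n 2))
    (hadj₂ : ∀ X ∈ ndCodes (ZMod 2) n 2, ∀ Y ∈ ndCodes (ZMod 2) n 2,
      adjSub (ZMod 2) n 2 X Y → adjSub (ZMod 2) n 2 (f₂ X) (f₂ Y))
    (hmem₃ : ∀ X ∈ ndCodes (ZMod 2) n 3, f₃ X ∈ grass (ZMod 2) n 3)
    (hinj₃ : Set.InjOn f₃ (ndCodes (ZMod 2) n 3))
    (hadj₃ : ∀ X ∈ ndCodes (ZMod 2) n 3, ∀ Y ∈ ndCodes (ZMod 2) n 3,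
      adjSub (ZMod 2) n 3 X Y → adjSub (ZMod 2) n 3 (f₃ X) (f₃ Y))
    (hstarT : ∃ P' : Submodule (ZMod 2) (Fin n → ZMod 2),
      Module.finrank (ZMod 2) ↥P' = 1 ∧
        f₂ '' starOf (ZMod 2) n 2 T = starOf (ZMod 2) n 2 P')
    (hcompat : ∀ X ∈ ndCodes (ZMod 2) n 2, ∀ Z ∈ ndCodes (ZMod 2) n 3,
      X ≤ Z → f₂ X ≤ f₃ Z)
    (hgmem : ∀ P ∈ weightGE3 n, g P ∈ grass (ZMod 2) n 1)
    (hg : ∀ P ∈ weightGE3 n, f₂ '' scOf (ZMod 2) n 2 P ⊆ starOf (ZMod 2) n 2 (g P)) :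
    Set.InjOn g (weightGE3 n) := by
  classical
  have hone : Wt3 (1 : Vec n) :=
    ⟨⟨0, by omega⟩, ⟨1, by omega⟩, ⟨2, by omega⟩, by simp, by simp, by simp, by simp, by simp,
      by simp⟩
  have hex : ∀ v : Vec n, ∃ u, Wt3 v → (u ≠ 0 ∧
      g (Submodule.span (ZMod 2) {v}) = Submodule.span (ZMod 2) {u}) := by
    intro v
    by_cases hv : Wt3 v
    · obtain ⟨u, hu⟩ := one_dim_exists (hgmem _ (weight_iff.2 ⟨v, hv, rfl⟩))
      exact ⟨u, fun _ => hu⟩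
    · exact ⟨0, fun h => absurd h hv⟩
  choose G hGG using hex
  have hG0 : ∀ v, Wt3 v → G v ≠ 0 := fun v hv => (hGG v hv).1
  have hG : ∀ v, Wt3 v → ∀ X ∈ ndCodes (ZMod 2) n 2, v ∈ X → G v ∈ f₂ X := by
    intro v hv X hX hvX
    have h : f₂ X ∈ starOf (ZMod 2) n 2 (g (Submodule.span (ZMod 2) {v})) := by
      apply hg _ (weight_iff.2 ⟨v, hv, rfl⟩)
      refine ⟨X, ⟨⟨hX.1, ?_⟩, hX⟩, rfl⟩
      rw [Submodule.span_le]
      simpa using hvX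
    apply h.2
    rw [(hGG v hv).2]
    exact Submodule.mem_span_singleton_self _
  have hT1 : T = Submodule.span (ZMod 2) {(1 : Vec n)} := hT
  have ndT : ∀ X ∈ starOf (ZMod 2) n 2 T, X ∈ ndCodes (ZMod 2) n 2 ∧ (1 : Vec n) ∈ X := by
    rintro X ⟨h1, h2⟩
    have h3 : (1 : Vec n) ∈ X := h2 (hT1 ▸ Submodule.mem_span_singleton_self _)
    exact ⟨⟨h1, not_le_coord h3 h3 (fun i => by simp)⟩, h3⟩
  obtain ⟨P', hP', hst⟩ := hstarT
  obtain ⟨s, hs0, rfl⟩ := one_dim_exists hP'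
  have hstar : ∀ Y : Submodule (ZMod 2) (Vec n), Module.finrank (ZMod 2) Y = 2 → s ∈ Y →
      ∃ X ∈ ndCodes (ZMod 2) n 2, (1 : Vec n) ∈ X ∧ f₂ X = Y := by
    intro Y hY hsY
    have : Y ∈ f₂ '' starOf (ZMod 2) n 2 T := by
      rw [hst]
      refine ⟨hY, ?_⟩
      rw [Submodule.span_le]
      simpa using hsY
    obtain ⟨X, hX, rfl⟩ := this
    exact ⟨X, (ndT X hX).1, (ndT X hX).2, rfl⟩
  have hsG : s = G 1 := by
    by_contra hne
    have hlt : Submodule.span (ZMod 2) {s, G 1} ≠ ⊤ := by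
      intro h
      have := finrank_pair hs0 (hG0 1 hone) hne
      rw [h, finrank_top] at this
      simp at this
      omega
    obtain ⟨w, hw⟩ : ∃ w, w ∉ Submodule.span (ZMod 2) {s, G 1} := by
      by_contra! h
      exact hlt (Submodule.eq_top_iff'.2 h)
    have hw0 : w ≠ 0 := by
      rintro rfl
      exact hw (zero_mem _)
    have hws : s ≠ w := by
      rintro rfl
      exact hw (Submodule.subset_span (by simp))
    obtain ⟨X, hX, h1X, hXY⟩ := hstar (Submodule.span (ZMod 2) {s, w}) (finrank_pair hs0 hw0 hws)
      (Submodule.subset_span (by simp))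
    have hm := hG 1 hone X hX h1X
    rw [hXY] at hm
    rcases mem_span_pair2 hm with h | h | h | h
    · exact hG0 1 hone h
    · exact hne h.symm
    · exact hw (h ▸ Submodule.subset_span (by simp))
    · apply hw
      have : w = s + G 1 := by rw [h, ← add_assoc, add_self2, zero_add]
      rw [this]
      exact add_mem (Submodule.subset_span (by simp)) (Submodule.subset_span (by simp))
  have case1 : ∀ q, Wt3 q → G q = G 1 → q = 1 := by
    intro q hq hGq
    by_contra hq1
    obtain ⟨i, j, l, hij, hil, hjl, hi, hj, hl⟩ := id hq
    have hi1 : q i = 1 := (z2_cases _).resolve_left hi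
    have hj1 : q j = 1 := (z2_cases _).resolve_left hj
    obtain ⟨e, he⟩ : ∃ e : Vec n, ∀ x, e x = if x = i then 0 else 1 := ⟨_, fun x => rfl⟩
    have hqe : q ≠ e := by
      rintro rfl
      simp [he] at hi
    have he0 : e ≠ 0 := by
      rintro rfl
      have := he j
      simp [hij.symm] at this
    have hnd : Submodule.span (ZMod 2) {q, e} ∈ ndCodes (ZMod 2) n 2 := by
      refine nd_pair hq.ne_zero he0 hqe ?_
      intro x
      by_cases hx : x = i
      · left
        rw [hx]
        exact hi
      · right
        simp [he, hx]
    have hmem := hG q hq _ hnd (Submodule.subset_span (by simp))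
    rw [hGq, ← hsG] at hmem
    obtain ⟨X, hX, h1X, hXY⟩ := hstar _ (hmem₂ _ hnd) hmem
    have := hinj₂ hX hnd hXY
    rw [this] at h1X
    rcases mem_span_pair2 h1X with h | h | h | h
    · exact hone.ne_zero h
    · exact hq1 h.symm
    · have := congrFun h i
      simp [he] at this
    · have := congrFun h j
      simp [he, hj1, hij.symm] at this
  have hGi : ∀ u v, Wt3 u → Wt3 v → G u = G v → u = v ∨ u + v = 1 := by
    intro u v hu hv huv
    by_cases hu1 : u = 1
    · left
      subst hu1
      exact (case1 v hv huv.symm).symm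
    by_cases hv1 : v = 1
    · left
      subst hv1
      exact case1 u hu huv
    have cov : ∀ u : Vec n, Cov u 1 := fun u i => Or.inr (by simp)
    have nu := nd_pair hu.ne_zero hone.ne_zero hu1 (cov u)
    have nv := nd_pair hv.ne_zero hone.ne_zero hv1 (cov v)
    have hne : G u ≠ G 1 := fun h => hu1 (case1 u hu h)
    have s1 := span_pair_eq (hmem₂ _ nu) (hG0 _ hu) (hG0 _ hone) hne
      (hG _ hu _ nu (Submodule.subset_span (by simp)))
      (hG _ hone _ nu (Submodule.subset_span (by simp)))
    have s2 := span_pair_eq (hmem₂ _ nv) (hG0 _ hu) (hG0 _ hone) hne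
      (huv ▸ hG _ hv _ nv (Submodule.subset_span (by simp)))
      (hG _ hone _ nv (Submodule.subset_span (by simp)))
    have heq := hinj₂ nu nv (s1.symm.trans s2)
    have hm : v ∈ Submodule.span (ZMod 2) {u, 1} := by
      rw [heq]
      exact Submodule.subset_span (by simp)
    rcases mem_span_pair2 hm with h | h | h | h
    · exact absurd h hv.ne_zero
    · exact Or.inl h.symm
    · exact absurd h hv1
    · right
      rw [h, ← add_assoc, add_self2, zero_add]
  intro P hP Q hQ hPQ
  obtain ⟨p, hp, rfl⟩ := weight_iff.1 hP
  obtain ⟨q, hq, rfl⟩ := weight_iff.1 hQ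
  have hGpq : G p = G q := by
    rw [(hGG p hp).2, (hGG q hq).2] at hPQ
    have hm : G p ∈ Submodule.span (ZMod 2) {G q} := hPQ ▸ Submodule.mem_span_singleton_self _
    obtain ⟨a, ha⟩ := Submodule.mem_span_singleton.1 hm
    rcases z2_cases a with rfl | rfl
    · exact absurd (by simpa using ha.symm) (hG0 p hp)
    · simpa using ha.symm
  rcases hGi p q hp hq hGpq with h | h
  · rw [h]
  · exact (core f₂ f₃ G hmem₂ hinj₂ hmem₃ hinj₃ hcompat hG0 hG hGi p q hp hq h hGpq).elim
end

section
/- Let 1 < k < n−1 and V = F_2^n. For every (k−1)-dimensional subspace X ⊂ V with c(X) ≤ n−k, there exist Y, Y' ∈ C(n,k)_2 such that X = Y ∩ Y' and each of Y and Y' contains the all-ones vector (1,…,1) or a vector of the form (1,…,1) + e_i for some i ∈ {1,…,n}, where e_i is the i-th standard basis vector. -/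
theorem aux_inf {n : ℕ} (X : Submodule (ZMod 2) (Fin n → ZMod 2)) (v w : Fin n → ZMod 2)
    (hw : w ∉ X ⊔ Submodule.span (ZMod 2) {v}) :
    X = (X ⊔ Submodule.span (ZMod 2) {v}) ⊓ (X ⊔ Submodule.span (ZMod 2) {w}) := by
  apply le_antisymm
  · exact le_inf le_sup_left le_sup_left
  · rintro x ⟨hx1, hx2⟩
    obtain ⟨b, hb, c, hc, rfl⟩ := Submodule.mem_sup.1 hx2
    obtain ⟨t, rfl⟩ := Submodule.mem_span_singleton.1 hc
    by_cases ht : t = 0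
    · simpa [ht] using hb
    · exfalso
      apply hw
      have h1 : t • w ∈ X ⊔ Submodule.span (ZMod 2) {v} := by
        have := Submodule.sub_mem _ hx1 (Submodule.mem_sup_left hb)
        simpa using this
      exact (Submodule.smul_mem_iff _ ht).1 h1

theorem aux_rank {n : ℕ} (X : Submodule (ZMod 2) (Fin n → ZMod 2)) (v : Fin n → ZMod 2)
    (hv : v ∉ X) :
    Module.finrank (ZMod 2) ↥(X ⊔ Submodule.span (ZMod 2) {v}) =
      Module.finrank (ZMod 2) ↥X + 1 := by
  have hv0 : v ≠ 0 := fun h => hv (h ▸ X.zero_mem)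
  have h := Submodule.finrank_sup_add_finrank_inf_eq X (Submodule.span (ZMod 2) {v})
  have h2 : X ⊓ Submodule.span (ZMod 2) {v} = ⊥ := by
    rw [eq_bot_iff]
    rintro x ⟨hx1, hx2⟩
    obtain ⟨t, rfl⟩ := Submodule.mem_span_singleton.1 hx2
    by_cases ht : t = 0
    · simp [ht]
    · exact absurd ((Submodule.smul_mem_iff _ ht).1 hx1) hv
  rw [h2, finrank_span_singleton hv0, finrank_bot] at h
  simpa using h

theorem aux_nd {n k : ℕ} (hk : 1 < k) (X : Submodule (ZMod 2) (Fin n → ZMod 2))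
    (hX : Module.finrank (ZMod 2) ↥X = k - 1) (v : Fin n → ZMod 2) (hv : v ∉ X)
    (h : ∀ i, X ≤ coordHyp (ZMod 2) n i → v i ≠ 0) :
    X ⊔ Submodule.span (ZMod 2) {v} ∈ ndCodes (ZMod 2) n k := by
  refine ⟨by rw [aux_rank X v hv, hX]; omega, fun i hi => ?_⟩
  refine h i (le_trans le_sup_left hi) ?_
  exact hi (Submodule.mem_sup_right (Submodule.mem_span_singleton_self v))

theorem aux_e {n k : ℕ} (hk : 1 < k) (hkn : k < n - 1)
    (X : Submodule (ZMod 2) (Fin n → ZMod 2))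
    (hX : Module.finrank (ZMod 2) ↥X = k - 1)
    (hc : numHyp (ZMod 2) n X ≤ n - k) :
    ∃ i, ¬ X ≤ coordHyp (ZMod 2) n i ∧ (Pi.single i 1 : Fin n → ZMod 2) ∉ X := by
  classical
  by_contra! hcon
  let N := {i : Fin n // ¬ X ≤ coordHyp (ZMod 2) n i}
  let f : N → X := fun i => ⟨Pi.single i.1 1, hcon i.1 i.2⟩
  have hf : LinearIndependent (ZMod 2) f := by
    apply LinearIndependent.of_comp X.subtype
    have := (Pi.linearIndependent_single_one (Fin n) (ZMod 2)).comp
      (fun i : N => i.1) Subtype.val_injective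
    exact this
  have h1 := hf.fintype_card_le_finrank
  have h2 := Fintype.card_subtype_compl (fun i : Fin n => X ≤ coordHyp (ZMod 2) n i)
  have h3 : numHyp (ZMod 2) n X = Fintype.card {i : Fin n // X ≤ coordHyp (ZMod 2) n i} := by
    rw [numHyp, ← Nat.card_coe_set_eq, ← Nat.card_eq_fintype_card]; rfl
  have h4 : Fintype.card N = n - numHyp (ZMod 2) n X := by
    rw [h3]; rw [Fintype.card_fin] at h2; exact h2
  omega

theorem aux_ex {n : ℕ} (X : Submodule (ZMod 2) (Fin n → ZMod 2))
    (hX : Module.finrank (ZMod 2) ↥X < n) : ∃ v, v ∉ X := by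
  by_contra! h
  have : X = ⊤ := Submodule.eq_top_iff'.2 h
  subst this
  simp at hX

/-- (`q = 2`, `1 < k < n-1`.) For every `(k-1)`-dimensional subspace
`X ⊂ F_2^n` with `c(X) ≤ n - k`, there exist `Y, Y' ∈ C(n,k)_2` with `X = Y ∩ Y'`, each
of `Y, Y'` containing the all-ones vector or a vector `(1,…,1) + eᵢ`. -/
theorem stmt_16 (n k : ℕ) (hk : 1 < k) (hkn : k < n - 1)
    (X : Submodule (ZMod 2) (Fin n → ZMod 2))
    (hX : Module.finrank (ZMod 2) ↥X = k - 1)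
    (hc : numHyp (ZMod 2) n X ≤ n - k) :
    ∃ Y ∈ ndCodes (ZMod 2) n k, ∃ Y' ∈ ndCodes (ZMod 2) n k,
      X = Y ⊓ Y' ∧
      ((fun _ => 1 : Fin n → ZMod 2) ∈ Y ∨
        ∃ i : Fin n, (fun _ => 1 : Fin n → ZMod 2) + Pi.single i 1 ∈ Y) ∧
      ((fun _ => 1 : Fin n → ZMod 2) ∈ Y' ∨
        ∃ i : Fin n, (fun _ => 1 : Fin n → ZMod 2) + Pi.single i 1 ∈ Y') := by
  by_cases hB : (∀ i, ¬ X ≤ coordHyp (ZMod 2) n i) ∧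
      ((fun _ => 1 : Fin n → ZMod 2) ∈ X ∨
        ∃ i : Fin n, (fun _ => 1 : Fin n → ZMod 2) + Pi.single i 1 ∈ X)
  · obtain ⟨hZ, hB⟩ := hB
    obtain ⟨v, hv⟩ := aux_ex X (by omega)
    obtain ⟨w, hw⟩ := aux_ex (X ⊔ Submodule.span (ZMod 2) {v}) (by rw [aux_rank X v hv]; omega)
    have hw' : w ∉ X := fun h => hw (Submodule.mem_sup_left h)
    refine ⟨_, aux_nd hk X hX v hv fun i hi => absurd hi (hZ i),
      _, aux_nd hk X hX w hw' fun i hi => absurd hi (hZ i), aux_inf X v w hw, ?_, ?_⟩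
    · exact hB.imp (fun h => Submodule.mem_sup_left h)
        (fun ⟨i, h⟩ => ⟨i, Submodule.mem_sup_left h⟩)
    · exact hB.imp (fun h => Submodule.mem_sup_left h)
        (fun ⟨i, h⟩ => ⟨i, Submodule.mem_sup_left h⟩)
  · obtain ⟨i, hi, hei⟩ := aux_e hk hkn X hX hc
    have h1i : ∀ j, X ≤ coordHyp (ZMod 2) n j →
        ((fun _ => 1 : Fin n → ZMod 2) + Pi.single i 1 : Fin n → ZMod 2) j ≠ 0 := by
      intro j hj
      have : j ≠ i := by rintro rfl; exact hi hj
      simp [this]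
    have hv : (fun _ => 1 : Fin n → ZMod 2) ∉ X := by
      intro h
      exact hB ⟨fun j hj => one_ne_zero (α := ZMod 2) (hj h), Or.inl h⟩
    have hw : (fun _ => 1 : Fin n → ZMod 2) + Pi.single i 1 ∉ X := by
      intro h
      exact hB ⟨fun j hj => h1i j hj (hj h), Or.inr ⟨i, h⟩⟩
    refine ⟨_, aux_nd hk X hX _ hv fun j _ => one_ne_zero,
      _, aux_nd hk X hX _ hw h1i, aux_inf X _ _ ?_,
      Or.inl (Submodule.mem_sup_right (Submodule.mem_span_singleton_self _)),
      Or.inr ⟨i, Submodule.mem_sup_right (Submodule.mem_span_singleton_self _)⟩⟩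
    intro h
    obtain ⟨b, hb, c, hc, hbc⟩ := Submodule.mem_sup.1 h
    obtain ⟨t, rfl⟩ := Submodule.mem_span_singleton.1 hc
    have ht : t = 0 ∨ t = 1 := (by decide : ∀ t : ZMod 2, t = 0 ∨ t = 1) t
    rcases ht with rfl | rfl
    · apply hw
      rw [← hbc]; simpa using hb
    · apply hei
      have : b = Pi.single i 1 := by
        rw [one_smul, add_comm] at hbc
        exact add_left_cancel hbc
      exact this ▸ hb
end

section
/- Let q be a prime power, k ≥ 3, 1 < k < n−1, and let f : C(n,k)_q → G_k(V) be an injective map sending adjacent pairs to adjacent pairs such that for every X ∈ C(n,k−1)_q the image f(S(X)) is a star of Γ_k(V). Let f' : C(n,k−1)_q → G_{k−1}(V) be the induced map, i.e., f(S(X)) = S(f'(X)) for every X ∈ C(n,k−1)_q. Then f' is injective, f'(X) and f'(Y) are adjacent whenever X, Y ∈ C(n,k−1)_q are adjacent, and for every X ∈ C(n,k−2)_q the image f'(S(X)) is a star of Γ_{k−1}(V) (where here S(X) ⊂ G_{k−1}(V) is the set of (k−1)-dimensional subspaces containing X). -/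
/-- Every proper subspace is covered by a subspace of dimension one more. -/
theorem exists_starOf_aux {F : Type*} [Field F] {n d : ℕ} {X P : Submodule F (Fin n → F)}
    (hX : Module.finrank F X = d) (hXP : X ≤ P) (hP : Module.finrank F P < n) :
    ∃ W ∈ starOf F n (d + 1) X, ¬ W ≤ P := by
  have hne : P ≠ ⊤ := by
    rintro rfl
    simp at hP
  obtain ⟨v, hv⟩ : ∃ v, v ∉ P := by
    by_contra! h
    exact hne (eq_top_iff.2 fun v _ => h v)
  refine ⟨X ⊔ Submodule.span F {v}, ⟨?_, le_sup_left⟩, fun h => hv ?_⟩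
  · rw [Submodule.finrank_sup_span_singleton (fun h => hv (hXP h)), hX]
  · exact h (Submodule.mem_sup_right (Submodule.mem_span_singleton_self v))

/-- A star determines its centre. -/
theorem starOf_inj_aux {F : Type*} [Field F] {n d : ℕ} {X Y : Submodule F (Fin n → F)}
    (hX : Module.finrank F X = d) (hY : Module.finrank F Y = d) (hd : d + 1 < n)
    (h : starOf F n (d + 1) X = starOf F n (d + 1) Y) : X = Y := by
  by_contra hne
  have hlt : d + 1 ≤ Module.finrank F (X ⊔ Y : Submodule F (Fin n → F)) := by
    by_contra! hlt
    have h1 : X = X ⊔ Y := Submodule.eq_of_le_of_finrank_le le_sup_left (by omega)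
    have h2 : Y = X ⊔ Y := Submodule.eq_of_le_of_finrank_le le_sup_right (by omega)
    exact hne (h1.trans h2.symm)
  have key : ∀ W ∈ starOf F n (d + 1) X, W = X ⊔ Y := by
    intro W hW
    have hW' := hW
    rw [h] at hW'
    exact (Submodule.eq_of_le_of_finrank_le (sup_le hW.2 hW'.2) (by rw [hW.1]; exact hlt)).symm
  obtain ⟨W, hW, -⟩ := exists_starOf_aux hX le_rfl (by omega)
  obtain ⟨U, hU, hUW⟩ := exists_starOf_aux hX hW.2 (by rw [hW.1]; omega)
  exact hUW (by rw [key U hU, key W hW])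

/-- Two distinct subspaces of dimension `d + 1` in a common one of dimension `d + 2`. -/
theorem inf_finrank_aux {F : Type*} [Field F] {n d : ℕ} {X Y Z : Submodule F (Fin n → F)}
    (hX : Module.finrank F X = d + 1) (hY : Module.finrank F Y = d + 1)
    (hZ : Module.finrank F Z = d + 2) (hXZ : X ≤ Z) (hYZ : Y ≤ Z) (hne : X ≠ Y) :
    Module.finrank F (X ⊓ Y : Submodule F (Fin n → F)) = d := by
  have h := Submodule.finrank_sup_add_finrank_inf_eq X Y
  have h1 : Module.finrank F (X ⊔ Y : Submodule F (Fin n → F)) ≤ d + 2 :=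
    hZ ▸ Submodule.finrank_mono (sup_le hXZ hYZ)
  have h2 : d + 2 ≤ Module.finrank F (X ⊔ Y : Submodule F (Fin n → F)) := by
    by_contra! hlt
    have h1 : X = X ⊔ Y := Submodule.eq_of_le_of_finrank_le le_sup_left (by omega)
    have h2 : Y = X ⊔ Y := Submodule.eq_of_le_of_finrank_le le_sup_right (by omega)
    exact hne (h1.trans h2.symm)
  omega

/-- Stars with centres of the same dimension have the same size. -/
theorem starOf_ncard_aux {F : Type*} [Field F] [Fintype F] {n m : ℕ}
    {X Y : Submodule F (Fin n → F)} (h : Module.finrank F X = Module.finrank F Y) :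
    (starOf F n m Y).ncard ≤ (starOf F n m X).ncard := by
  obtain ⟨P, hP⟩ := Submodule.exists_isCompl X
  obtain ⟨Q, hQ⟩ := Submodule.exists_isCompl Y
  have hPQ : Module.finrank F P = Module.finrank F Q := by
    have h1 := Submodule.finrank_add_eq_of_isCompl hP
    have h2 := Submodule.finrank_add_eq_of_isCompl hQ
    omega
  let e : (Fin n → F) ≃ₗ[F] (Fin n → F) :=
    (Submodule.prodEquivOfIsCompl Y Q hQ).symm ≪≫ₗ
      ((LinearEquiv.ofFinrankEq Y X h.symm).prodCongr (LinearEquiv.ofFinrankEq Q P hPQ.symm)) ≪≫ₗ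
      (Submodule.prodEquivOfIsCompl X P hP)
  have he1 : Y.map (e : (Fin n → F) →ₗ[F] (Fin n → F)) ≤ X := by
    rintro _ ⟨y, hy, rfl⟩
    have : (Submodule.prodEquivOfIsCompl Y Q hQ).symm y = (⟨y, hy⟩, 0) :=
      Submodule.prodEquivOfIsCompl_symm_apply_left Y Q hQ ⟨y, hy⟩
    simp [e, this]
  have he : Y.map (e : (Fin n → F) →ₗ[F] (Fin n → F)) = X :=
    Submodule.eq_of_le_of_finrank_le he1 (by rw [LinearEquiv.finrank_map_eq]; omega)
  refine Set.ncard_le_ncard_of_injOn (fun W => W.map (e : (Fin n → F) →ₗ[F] (Fin n → F)))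
    ?_ ?_ (Set.toFinite _)
  · rintro W ⟨hW1, hW2⟩
    refine ⟨?_, ?_⟩
    · rw [LinearEquiv.finrank_map_eq]; exact hW1
    · rw [← he]; exact Submodule.map_mono hW2
  · exact (Submodule.map_injective_of_injective e.injective).injOn

/-- A clique containing two distinct elements lies in a star or in a top. -/
theorem clique_aux {F : Type*} [Field F] {n d : ℕ} {S : Set (Submodule F (Fin n → F))}
    (hS : ∀ A ∈ S, Module.finrank F A = d + 1)
    (hadj : ∀ A ∈ S, ∀ B ∈ S, A ≠ B →
      Module.finrank F (A ⊓ B : Submodule F (Fin n → F)) = d)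
    {A B : Submodule F (Fin n → F)} (hA : A ∈ S) (hB : B ∈ S) (hAB : A ≠ B) :
    (∀ C ∈ S, A ⊓ B ≤ C) ∨ (∀ C ∈ S, C ≤ A ⊔ B) := by
  have hI := hadj A hA B hB hAB
  have hJ : Module.finrank F (A ⊔ B : Submodule F (Fin n → F)) = d + 2 := by
    have h := Submodule.finrank_sup_add_finrank_inf_eq A B
    rw [hS A hA, hS B hB, hI] at h
    omega
  have step : ∀ C ∈ S, ¬ A ⊓ B ≤ C → C ≤ A ⊔ B := by
    intro C hC hn
    have hCA : C ≠ A := by rintro rfl; exact hn inf_le_left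
    have hCB : C ≠ B := by rintro rfl; exact hn inf_le_right
    have h1 := hadj C hC A hA hCA
    have h2 := hadj C hC B hB hCB
    have hle : C ⊓ A ⊔ C ⊓ B ≤ C := sup_le inf_le_left inf_le_left
    have hge : d + 1 ≤ Module.finrank F (C ⊓ A ⊔ C ⊓ B : Submodule F (Fin n → F)) := by
      by_contra! hlt
      have e1 : C ⊓ A = C ⊓ A ⊔ C ⊓ B :=
        Submodule.eq_of_le_of_finrank_le le_sup_left (by omega)
      have e2 : C ⊓ B = C ⊓ A ⊔ C ⊓ B :=
        Submodule.eq_of_le_of_finrank_le le_sup_right (by omega)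
      have e3 : C ⊓ A = C ⊓ B := e1.trans e2.symm
      have e4 : C ⊓ A = A ⊓ B :=
        Submodule.eq_of_le_of_finrank_le (le_inf inf_le_right (e3.le.trans inf_le_right))
          (by omega)
      exact hn (e4 ▸ inf_le_left)
    have e : C ⊓ A ⊔ C ⊓ B = C :=
      Submodule.eq_of_le_of_finrank_le hle (by rw [hS C hC]; exact hge)
    rw [← e]
    exact sup_le_sup inf_le_right inf_le_right
  by_contra! hcon
  obtain ⟨⟨C, hC, hCn⟩, D, hD, hDn⟩ := hcon
  have hCJ := step C hC hCn
  have hID : A ⊓ B ≤ D := by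
    by_contra h
    exact hDn (step D hD h)
  have hDC : D ≠ C := by rintro rfl; exact hDn hCJ
  have h1 := hadj D hD C hC hDC
  have h2 : Module.finrank F (D ⊓ (A ⊔ B) : Submodule F (Fin n → F)) ≤ d := by
    by_contra! hlt
    have : D ⊓ (A ⊔ B) = D :=
      Submodule.eq_of_le_of_finrank_le inf_le_left (by rw [hS D hD]; omega)
    exact hDn (inf_eq_left.1 this)
  have e1 : A ⊓ B = D ⊓ (A ⊔ B) :=
    Submodule.eq_of_le_of_finrank_le (le_inf hID (inf_le_left.trans le_sup_left)) (by omega)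
  have e2 : D ⊓ C = A ⊓ B :=
    Submodule.eq_of_le_of_finrank_le
      ((inf_le_inf_left D hCJ).trans e1.ge) (by omega)
  exact hCn (e2 ▸ inf_le_right)

/-- (`k ≥ 3`, `1 < k < n-1`.) Let `f : C(n,k)_q → G_k(V)` be injective,
adjacency-preserving and send every maximal star `S(X)`, `X ∈ C(n,k-1)_q`, to a star of
`Γ_k(V)`; let `f' : C(n,k-1)_q → G_{k-1}(V)` be the induced map, i.e.
`f(S(X)) = S(f'(X))`. Then `f'` is injective, adjacency-preserving, and sends every
maximal star `S(X)`, `X ∈ C(n,k-2)_q`, to a star of `Γ_{k-1}(V)`. -/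
theorem stmt_18 (q n k : ℕ) (F : Type*) [Field F] [Fintype F]
    (hF : Fintype.card F = q) (hk3 : 3 ≤ k) (hk : 1 < k) (hkn : k < n - 1)
    (f : Submodule F (Fin n → F) → Submodule F (Fin n → F))
    (hmem : ∀ X ∈ ndCodes F n k, f X ∈ grass F n k)
    (hinj : Set.InjOn f (ndCodes F n k))
    (hadj : ∀ X ∈ ndCodes F n k, ∀ Y ∈ ndCodes F n k,
      adjSub F n k X Y → adjSub F n k (f X) (f Y))
    (f' : Submodule F (Fin n → F) → Submodule F (Fin n → F))
    (hf' : ∀ X ∈ ndCodes F n (k - 1),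
      Module.finrank F ↥(f' X) = k - 1 ∧ f '' starOf F n k X = starOf F n k (f' X)) :
    Set.InjOn f' (ndCodes F n (k - 1)) ∧
    (∀ X ∈ ndCodes F n (k - 1), ∀ Y ∈ ndCodes F n (k - 1),
      adjSub F n (k - 1) X Y → adjSub F n (k - 1) (f' X) (f' Y)) ∧
    (∀ X ∈ ndCodes F n (k - 2), ∃ X' : Submodule F (Fin n → F),
      Module.finrank F ↥X' = k - 2 ∧
        f' '' starOf F n (k - 1) X = starOf F n (k - 1) X') := by
  obtain ⟨j, rfl⟩ : ∃ j, k = j + 2 := ⟨k - 2, by omega⟩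
  have ek1 : j + 2 - 1 = j + 1 := rfl
  have ek2 : j + 2 - 2 = j := rfl
  rw [ek1] at hf'
  rw [ek1, ek2]
  have nd : ∀ {a b : ℕ} {X W : Submodule F (Fin n → F)}, X ∈ ndCodes F n a →
      W ∈ starOf F n b X → W ∈ ndCodes F n b :=
    fun hX hW => ⟨hW.1, fun i h => hX.2 i (hW.2.trans h)⟩
  have inj : Set.InjOn f' (ndCodes F n (j + 1)) := by
    intro X hX Y hY hXY
    refine starOf_inj_aux hX.1 hY.1 (by omega) ?_
    have h : f '' starOf F n (j + 2) X = f '' starOf F n (j + 2) Y := by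
      rw [(hf' X hX).2, (hf' Y hY).2, hXY]
    exact (hinj.image_eq_image_iff (fun W hW => nd hX hW) (fun W hW => nd hY hW)).1 h
  have adj : ∀ X ∈ ndCodes F n (j + 1), ∀ Y ∈ ndCodes F n (j + 1),
      adjSub F n (j + 1) X Y → adjSub F n (j + 1) (f' X) (f' Y) := by
    intro X hX Y hY hXY
    have hI : Module.finrank F (X ⊓ Y : Submodule F (Fin n → F)) = j := hXY
    have hne : X ≠ Y := by
      rintro rfl
      rw [inf_idem, hX.1] at hI
      omega
    have hJ : Module.finrank F (X ⊔ Y : Submodule F (Fin n → F)) = j + 2 := by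
      have h := Submodule.finrank_sup_add_finrank_inf_eq X Y
      rw [hX.1, hY.1, hI] at h
      omega
    have h1 : f (X ⊔ Y) ∈ starOf F n (j + 2) (f' X) := by
      rw [← (hf' X hX).2]
      exact ⟨_, ⟨hJ, le_sup_left⟩, rfl⟩
    have h2 : f (X ⊔ Y) ∈ starOf F n (j + 2) (f' Y) := by
      rw [← (hf' Y hY).2]
      exact ⟨_, ⟨hJ, le_sup_right⟩, rfl⟩
    exact inf_finrank_aux (hf' X hX).1 (hf' Y hY).1 h1.1 h1.2 h2.2
      (fun h => hne (inj hX hY h))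
  refine ⟨inj, adj, ?_⟩
  intro X hX
  have sub : ∀ W ∈ starOf F n (j + 1) X, W ∈ ndCodes F n (j + 1) := fun W hW => nd hX hW
  have cl : ∀ A ∈ starOf F n (j + 1) X, ∀ B ∈ starOf F n (j + 1) X, A ≠ B →
      Module.finrank F (f' A ⊓ f' B : Submodule F (Fin n → F)) = j := by
    intro A hA B hB hAB
    refine adj A (sub A hA) B (sub B hB) ?_
    have h1 : j ≤ Module.finrank F (A ⊓ B : Submodule F (Fin n → F)) :=
      hX.1 ▸ Submodule.finrank_mono (le_inf hA.2 hB.2)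
    have h2 : Module.finrank F (A ⊓ B : Submodule F (Fin n → F)) ≤ j := by
      by_contra! hlt
      have e1 : A ⊓ B = A :=
        Submodule.eq_of_le_of_finrank_le inf_le_left (by rw [hA.1]; omega)
      have e2 : A ⊓ B = B :=
        Submodule.eq_of_le_of_finrank_le inf_le_right (by rw [hB.1]; omega)
      exact hAB (e1.symm.trans e2)
    exact le_antisymm h2 h1
  obtain ⟨A, hA, -⟩ := exists_starOf_aux hX.1 le_rfl (by rw [hX.1]; omega)
  obtain ⟨B, hB, hBA⟩ := exists_starOf_aux hX.1 hA.2 (by rw [hA.1]; omega)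
  have hAB : A ≠ B := by rintro rfl; exact hBA le_rfl
  have hAB' : f' A ≠ f' B := fun h => hAB (inj (sub A hA) (sub B hB) h)
  have hI := cl A hA B hB hAB
  have hJ : Module.finrank F (f' A ⊔ f' B : Submodule F (Fin n → F)) = j + 2 := by
    have h := Submodule.finrank_sup_add_finrank_inf_eq (f' A) (f' B)
    rw [(hf' A (sub A hA)).1, (hf' B (sub B hB)).1, hI] at h
    omega
  have hcl := clique_aux (S := f' '' starOf F n (j + 1) X) (d := j)
    (by rintro _ ⟨W, hW, rfl⟩; exact (hf' W (sub W hW)).1)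
    (by
      rintro _ ⟨W, hW, rfl⟩ _ ⟨U, hU, rfl⟩ hne
      exact cl W hW U hU (fun h => hne (by rw [h])))
    ⟨A, hA, rfl⟩ ⟨B, hB, rfl⟩ hAB'
  rcases hcl with hstar | htop
  · refine ⟨f' A ⊓ f' B, hI, ?_⟩
    refine Set.eq_of_subset_of_ncard_le ?_ ?_ (Set.toFinite _)
    · rintro _ ⟨W, hW, rfl⟩
      exact ⟨(hf' W (sub W hW)).1, hstar _ ⟨W, hW, rfl⟩⟩
    · rw [Set.ncard_image_of_injOn (inj.mono sub)]
      exact starOf_ncard_aux (hX.1.trans hI.symm)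
  · exfalso
    have pre : ∀ W ∈ starOf F n (j + 1) X, ∃ P ∈ starOf F n (j + 2) W,
        f P = f' A ⊔ f' B := by
      intro W hW
      have : f' A ⊔ f' B ∈ starOf F n (j + 2) (f' W) := ⟨hJ, htop _ ⟨W, hW, rfl⟩⟩
      rw [← (hf' W (sub W hW)).2] at this
      exact this
    obtain ⟨P, hP, hfP⟩ := pre A hA
    obtain ⟨W, hW, hWP⟩ := exists_starOf_aux hX.1 (hA.2.trans hP.2) (by rw [hP.1]; omega)
    obtain ⟨Q, hQ, hfQ⟩ := pre W hW
    have : Q = P := hinj (nd (sub W hW) hQ) (nd (sub A hA) hP) (hfQ.trans hfP.symm)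
    exact hWP (this ▸ hQ.2)
end
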